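/- Let Q_8 = {±1, ±i, ±j, ±k} be the quaternion group of order 8 and let H_i = ⟨i⟩, H_j = ⟨j⟩, H_k = ⟨k⟩ be its three cyclic subgroups of order 4, each containing the common subgroup {1, −1} of order 2. Let A be the amalgamated free product of H_i, H_j, H_k over {1, −1} — equivalently, the group with presentation ⟨i, j, k | i⁴ = 1, i² = j² = k²⟩, the pushout of the three inclusions C_2 → C_4 — and let p : A → Q_8 be the canonical homomorphism induced by the inclusions of H_i, H_j, H_k into Q_8. Then p is surjective and Ker p is a free group of rank 3. -/

import Mathlib

/-- The relators `i⁴`, `i²j⁻²`, `i²k⁻²` of the presentation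
`⟨i, j, k ∣ i⁴ = 1, i² = j² = k²⟩` (generators indexed by `Fin 3`). -/
def q8Rels : Set (FreeGroup (Fin 3)) :=
  {FreeGroup.of 0 ^ 4,
   FreeGroup.of 0 ^ 2 * (FreeGroup.of 1 ^ 2)⁻¹,
   FreeGroup.of 0 ^ 2 * (FreeGroup.of 2 ^ 2)⁻¹}

/-- The amalgamated free product `A = C₄ ∗_{C₂} C₄ ∗_{C₂} C₄`, presented as
`⟨i, j, k ∣ i⁴ = 1, i² = j² = k²⟩`: the pushout of the three inclusions `C₂ → C₄`. -/
abbrev AmalgQ8 : Type := PresentedGroup q8Rels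

namespace Q8Amalg

open QuaternionGroup

/-- Images of the generators in `Q₈`. -/
def gen : Fin 3 → QuaternionGroup 2 := ![a 1, xa 0, xa 1]

/-- The Schreier cocycle. -/
def coc (g : Fin 3) : QuaternionGroup 2 → FreeGroup (Fin 3)
  | .a n => (![![1, 1, 1, 1],
      ![1, (FreeGroup.of 0)⁻¹, 1, (FreeGroup.of 0)⁻¹],
      ![1, FreeGroup.of 1, 1, FreeGroup.of 1]] : Fin 3 → Fin 4 → FreeGroup (Fin 3)) g n
  | .xa n => (![![FreeGroup.of 2, (FreeGroup.of 2)⁻¹, FreeGroup.of 2, (FreeGroup.of 2)⁻¹],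
      ![1, FreeGroup.of 0, 1, FreeGroup.of 0],
      ![(FreeGroup.of 1)⁻¹, 1, (FreeGroup.of 1)⁻¹, 1]] : Fin 3 → Fin 4 → FreeGroup (Fin 3)) g n

abbrev X := FreeGroup (Fin 3) × QuaternionGroup 2

/-- The permutation attached to a generator. -/
def perm (g : Fin 3) : Equiv.Perm X where
  toFun x := (coc g x.2 * x.1, gen g * x.2)
  invFun x := ((coc g ((gen g)⁻¹ * x.2))⁻¹ * x.1, (gen g)⁻¹ * x.2)
  left_inv x := by simp
  right_inv x := by simp

theorem perm_apply (g : Fin 3) (x : X) : perm g x = (coc g x.2 * x.1, gen g * x.2) := rfl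

theorem perm_sq (g : Fin 3) (x : X) : perm g (perm g x) = (x.1, a 2 * x.2) := by
  have h1 : ∀ q, coc g (gen g * q) * coc g q = 1 := by
    intro q
    fin_cases g <;> rcases q with n | n <;> (change Fin 4 at n; fin_cases n) <;> decide
  have h2 : gen g * gen g = a 2 := by fin_cases g <;> decide
  rw [perm_apply, perm_apply]
  simp only [← mul_assoc, h1, h2, one_mul]

theorem act_rel : ∀ r ∈ q8Rels, FreeGroup.lift perm r = 1 := by
  have h4 : (a 2 : QuaternionGroup 2) * a 2 = 1 := by decide
  rintro r (rfl | rfl | rfl)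
  · ext1 x
    simp only [map_mul, FreeGroup.lift_apply_of, pow_succ, pow_zero, one_mul, Equiv.Perm.mul_apply,
      perm_sq, Equiv.Perm.one_apply]
    rw [← mul_assoc, h4, one_mul]
  all_goals
    rw [map_mul, map_inv, mul_inv_eq_one]
    ext1 x
    simp only [map_mul, FreeGroup.lift_apply_of, pow_succ, pow_zero, one_mul, Equiv.Perm.mul_apply,
      perm_sq]

def act : AmalgQ8 →* Equiv.Perm X := PresentedGroup.toGroup act_rel

theorem p_rel : ∀ r ∈ q8Rels, FreeGroup.lift gen r = 1 := by
  rintro r (rfl | rfl | rfl) <;>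
  simp only [map_pow, map_mul, map_inv, FreeGroup.lift_apply_of] <;> decide

def p : AmalgQ8 →* QuaternionGroup 2 := PresentedGroup.toGroup p_rel

theorem act_of (g : Fin 3) : act (PresentedGroup.of g) = perm g := PresentedGroup.toGroup.of _
theorem p_of (g : Fin 3) : p (PresentedGroup.of g) = gen g := PresentedGroup.toGroup.of _

theorem equivariant {Y : Type} (β : AmalgQ8 →* Equiv.Perm Y) (f : X → Y)
    (h : ∀ g x, f (perm g x) = β (PresentedGroup.of g) (f x)) (b : AmalgQ8) :
    ∀ x, f (act b x) = β b (f x) := by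
  have hb : b ∈ Subgroup.closure (Set.range (PresentedGroup.of (rels := q8Rels))) := by
    rw [PresentedGroup.closure_range_of]; trivial
  induction hb using Subgroup.closure_induction with
  | mem y hy => obtain ⟨g, rfl⟩ := hy; intro x; rw [act_of, h]
  | one => simp
  | mul y z _ _ hy hz => intro x; simp [hy, hz]
  | inv y _ hy =>
    intro x
    rw [map_inv, map_inv, Equiv.Perm.eq_inv_iff_eq, ← hy]
    simp

theorem act_right (b : AmalgQ8) (v : FreeGroup (Fin 3)) (x : X) :
    act b (x.1 * v, x.2) = ((act b x).1 * v, (act b x).2) :=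
  (equivariant act (fun x => (x.1 * v, x.2))
    (fun g x => by simp [act_of, perm_apply, mul_assoc]) b x).symm

theorem act_snd (b : AmalgQ8) (x : X) : (act b x).2 = p b * x.2 :=
  equivariant ((MulAction.toPermHom (QuaternionGroup 2) (QuaternionGroup 2)).comp p) Prod.snd
    (fun g x => by simp [p_of, perm_apply]) b x

abbrev I : AmalgQ8 := PresentedGroup.of 0
abbrev J : AmalgQ8 := PresentedGroup.of 1
abbrev K : AmalgQ8 := PresentedGroup.of 2

theorem rel_pow : I ^ 4 = 1 := by
  have := PresentedGroup.one_of_mem (rels := q8Rels) (x := FreeGroup.of 0 ^ 4) (by simp [q8Rels])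
  exact this

theorem rel_J : I ^ 2 = J ^ 2 := by
  have := PresentedGroup.one_of_mem (rels := q8Rels)
    (x := FreeGroup.of 0 ^ 2 * (FreeGroup.of 1 ^ 2)⁻¹) (by simp [q8Rels])
  rw [map_mul, map_inv, mul_inv_eq_one] at this
  exact this

theorem rel_K : I ^ 2 = K ^ 2 := by
  have := PresentedGroup.one_of_mem (rels := q8Rels)
    (x := FreeGroup.of 0 ^ 2 * (FreeGroup.of 2 ^ 2)⁻¹) (by simp [q8Rels])
  rw [map_mul, map_inv, mul_inv_eq_one] at this
  exact this

def ψ : FreeGroup (Fin 3) →* AmalgQ8 :=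
  FreeGroup.lift ![I * (J * K), J * (K * I), K * (I * J)]

/-- The transversal. -/
def sec : QuaternionGroup 2 → AmalgQ8
  | .a n => (![1, I, I ^ 2, I ^ 2 * I] : Fin 4 → AmalgQ8) n
  | .xa n => (![J, K, I ^ 2 * J, I ^ 2 * K] : Fin 4 → AmalgQ8) n

theorem sec_step (g : Fin 3) (q : QuaternionGroup 2) :
    PresentedGroup.of g * sec q = sec (gen g * q) * ψ (coc g q) := by
  obtain ⟨z, hz⟩ : ∃ z, z = I ^ 2 := ⟨_, rfl⟩
  have i1 : I * I = z := by rw [hz, sq]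
  have j1 : J * J = z := by rw [hz, rel_J, sq]
  have k1 : K * K = z := by rw [hz, rel_K, sq]
  have z1 : z * z = 1 := by rw [hz, ← rel_pow, ← pow_add]
  have i3 : I * z = z * I := by rw [← i1, mul_assoc]
  have j3 : J * z = z * J := by rw [← j1, mul_assoc]
  have k3 : K * z = z * K := by rw [← k1, mul_assoc]
  have z2 : ∀ w, z * (z * w) = w := fun w => by rw [← mul_assoc, z1, one_mul]
  have i2 : ∀ w, I * (I * w) = z * w := fun w => by rw [← mul_assoc, i1]
  have j2 : ∀ w, J * (J * w) = z * w := fun w => by rw [← mul_assoc, j1]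
  have k2 : ∀ w, K * (K * w) = z * w := fun w => by rw [← mul_assoc, k1]
  have i4 : ∀ w, I * (z * w) = z * (I * w) := fun w => by rw [← mul_assoc, i3, mul_assoc]
  have j4 : ∀ w, J * (z * w) = z * (J * w) := fun w => by rw [← mul_assoc, j3, mul_assoc]
  have k4 : ∀ w, K * (z * w) = z * (K * w) := fun w => by rw [← mul_assoc, k3, mul_assoc]
  have i5 : I⁻¹ = z * I := by rw [inv_eq_iff_mul_eq_one, i4, i1, z1]
  have j5 : J⁻¹ = z * J := by rw [inv_eq_iff_mul_eq_one, j4, j1, z1]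
  have k5 : K⁻¹ = z * K := by rw [inv_eq_iff_mul_eq_one, k4, k1, z1]
  have a0 : sec (a 0) = 1 := rfl
  have a1 : sec (a 1) = I := rfl
  have a2 : sec (a 2) = z := hz ▸ rfl
  have a3 : sec (a 3) = z * I := hz ▸ rfl
  have x0 : sec (xa 0) = J := rfl
  have x1 : sec (xa 1) = K := rfl
  have x2 : sec (xa 2) = z * J := hz ▸ rfl
  have x3 : sec (xa 3) = z * K := hz ▸ rfl
  have m : ∀ q : QuaternionGroup 2, q = a 0 ∨ q = a 1 ∨ q = a 2 ∨ q = a 3 ∨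
    q = xa 0 ∨ q = xa 1 ∨ q = xa 2 ∨ q = xa 3 := by decide
  have p0 : ψ (FreeGroup.of 0) = I * (J * K) := by simp [ψ]
  have p1 : ψ (FreeGroup.of 1) = J * (K * I) := by simp [ψ]
  have p2 : ψ (FreeGroup.of 2) = K * (I * J) := by simp [ψ]
  have key : ∀ (r : QuaternionGroup 2) (w : FreeGroup (Fin 3)), gen g * q = r → coc g q = w →
      PresentedGroup.of g * sec q = sec r * ψ w →
      PresentedGroup.of g * sec q = sec (gen g * q) * ψ (coc g q) := by
    rintro r w rfl rfl h; exact h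
  have fin : ∀ g : Fin 3, g = 0 ∨ g = 1 ∨ g = 2 := by decide
  rcases fin g with rfl | rfl | rfl <;>
  rcases m q with rfl | rfl | rfl | rfl | rfl | rfl | rfl | rfl <;>
  first
  | (refine key (a 0) _ (by decide) rfl ?_)
  | (refine key (a 1) _ (by decide) rfl ?_)
  | (refine key (a 2) _ (by decide) rfl ?_)
  | (refine key (a 3) _ (by decide) rfl ?_)
  | (refine key (xa 0) _ (by decide) rfl ?_)
  | (refine key (xa 1) _ (by decide) rfl ?_)
  | (refine key (xa 2) _ (by decide) rfl ?_)
  | (refine key (xa 3) _ (by decide) rfl ?_)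
  all_goals
    simp only [a0, a1, a2, a3, x0, x1, x2, x3]
    first
    | (change _ = _ * ψ 1; rw [map_one])
    | (change _ = _ * ψ (FreeGroup.of 0); rw [p0])
    | (change _ = _ * ψ (FreeGroup.of 1); rw [p1])
    | (change _ = _ * ψ (FreeGroup.of 2); rw [p2])
    | (change _ = _ * ψ (FreeGroup.of 0)⁻¹; rw [map_inv, p0])
    | (change _ = _ * ψ (FreeGroup.of 1)⁻¹; rw [map_inv, p1])
    | (change _ = _ * ψ (FreeGroup.of 2)⁻¹; rw [map_inv, p2])
    try simp only [mul_inv_rev, mul_assoc, mul_one, i1, i2, i3, i4, i5, j1, j2, j3, j4, j5,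
      k1, k2, k3, k4, k5, z1, z2]

def Φ (x : X) : AmalgQ8 := sec x.2 * ψ x.1

theorem Φ_act (b : AmalgQ8) (x : X) : Φ (act b x) = b * Φ x :=
  equivariant (MulAction.toPermHom AmalgQ8 AmalgQ8) Φ
    (fun g x => by simp [Φ, perm_apply, ← mul_assoc, sec_step]) b x

theorem p_ψ (w : FreeGroup (Fin 3)) : p (ψ w) = 1 := by
  have : p.comp ψ = 1 := by
    ext g
    fin_cases g <;> simp [ψ, -map_mul] <;> simp only [map_mul, p_of] <;> decide
  exact DFunLike.congr_fun this w

def κ : p.ker →* FreeGroup (Fin 3) where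
  toFun b := (act b.1 (1, 1)).1
  map_one' := by simp
  map_mul' b c := by
    have h2 : act c.1 (1, 1) = (1 * (act c.1 (1, 1)).1, 1) := by
      have := act_snd c.1 (1, 1)
      rw [c.2] at this
      ext1 <;> simp [this]
    have h3 := act_right b.1 (act c.1 (1, 1)).1 (1, 1)
    change (act (b.1 * c.1) (1, 1)).1 = _
    rw [map_mul, Equiv.Perm.mul_apply, h2, h3]
    simp

def ψker : FreeGroup (Fin 3) →* p.ker := ψ.codRestrict p.ker p_ψ

theorem κ_ψ : κ.comp ψker = MonoidHom.id _ := by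
  ext g
  change (act (ψ (FreeGroup.of g)) (1, 1)).1 = FreeGroup.of g
  fin_cases g <;>
  simp only [ψ, FreeGroup.lift_apply_of] <;>
  [change (act (I * (J * K)) (1, 1)).1 = _; change (act (J * (K * I)) (1, 1)).1 = _;
    change (act (K * (I * J)) (1, 1)).1 = _] <;>
  rw [map_mul, map_mul, act_of, act_of, act_of] <;> decide

theorem ψ_κ : ψker.comp κ = MonoidHom.id _ := by
  ext b
  change ψ (act b.1 (1, 1)).1 = b.1
  have h := Φ_act b.1 (1, 1)
  have h2 := act_snd b.1 (1, 1)
  rw [b.2] at h2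
  have h1 : sec 1 = 1 := rfl
  simpa [Φ, h2, h1] using h

theorem p_surj : Function.Surjective p := by
  have h : ∀ q : QuaternionGroup 2, ∃ m n : Fin 4, gen 0 ^ (m : ℕ) * gen 1 ^ (n : ℕ) = q := by
    decide
  intro q
  obtain ⟨m, n, rfl⟩ := h q
  exact ⟨I ^ (m : ℕ) * J ^ (n : ℕ), by simp only [map_mul, map_pow, p_of]⟩

end Q8Amalg

/-- the canonical homomorphism `p : A → Q₈` induced by the inclusions of the
three cyclic subgroups `H_i = ⟨i⟩`, `H_j = ⟨j⟩`, `H_k = ⟨k⟩` of the quaternion group `Q₈`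
(i.e. the homomorphism sending the generators of the presentation to `i`, `j`, `k`) is
surjective, and its kernel is a free group of rank `3`. -/
theorem q8_amalgam_kernel :
    ∃ p : AmalgQ8 →* QuaternionGroup 2,
      (p (PresentedGroup.of 0) = QuaternionGroup.a 1 ∧
       p (PresentedGroup.of 1) = QuaternionGroup.xa 0 ∧
       p (PresentedGroup.of 2) = QuaternionGroup.xa 1) ∧
      Function.Surjective p ∧
      Nonempty (p.ker ≃* FreeGroup (Fin 3)) :=
  ⟨Q8Amalg.p, ⟨Q8Amalg.p_of 0, Q8Amalg.p_of 1, Q8Amalg.p_of 2⟩, Q8Amalg.p_surj,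
    ⟨MonoidHom.toMulEquiv Q8Amalg.κ Q8Amalg.ψker Q8Amalg.ψ_κ Q8Amalg.κ_ψ⟩⟩
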